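/- arXiv:1010.4692 — 2 statements merged into one kernel-verified Lean document; each statement's English description precedes it below -/
import Mathlib

section
/- Let I ⊆ S = K[x_1,…,x_n] be a monomial ideal with Ass(S/I) = {P_1,…,P_s}. Then sdepth_S(I) ≤ min{ sdepth_S(P_i) : 1 ≤ i ≤ s }. -/
/-!
Both ideals involved are spanned by monomials, so a Stanley decomposition is the same thing as a
partition of a set of exponents into boxes `u + ℕ^Z`. Pulling such a partition of the exponents of
`I` back along `d ↦ v + d` gives a partition of the exponents of `I : x^v` into boxes for the same
sets `Z`, so `sdepth I ≤ sdepth (I : x^v)`.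

It remains to see that an associated prime `P = I : f` has the form `I : x^v`. If `g f ∈ I`, then
peeling off the leading terms of `f` one at a time shows that a power of the leading term of `g`
multiplies `f` into `I`; hence `P` contains the leading terms of its elements and is a monomial
ideal. So `P` sends each monomial of `f` into `I`. Conversely the intersection of the `I : x^v`,
for `x^v` a monomial of `f`, lies in `I : f = P`, and one of them lies in `P` because `P` is prime.
-/

open MvPolynomial

/-- The Stanley space `u·K[Z]` inside the polynomial ring `K[x_i : i ∈ σ]`:
the `K`-span of all monomials `x^(u+v)` with `supp v ⊆ Z`. -/
noncomputable def stanleySpace (K : Type*) [Field K] {σ : Type*} (u : σ →₀ ℕ) (Z : Set σ) :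
    Submodule K (MvPolynomial σ K) :=
  Submodule.span K
    ((fun v : σ →₀ ℕ => (monomial (u + v) (1 : K) : MvPolynomial σ K)) ''
      {v | (v.support : Set σ) ⊆ Z})

/-- `(u, Z)` (indexed by a finite type `ι`) is a Stanley decomposition of the monomial
ideal `I`: the Stanley spaces `x^(u i)·K[Z i]` are independent and their (direct) sum is `I`
as a `K`-vector space.  (Inside the polynomial ring each Stanley space is automatically a
free `K[Z]`-module.) -/
def IsStanleyDecompOfIdeal {K σ : Type*} [Field K] {ι : Type} [Fintype ι]
    (I : Ideal (MvPolynomial σ K)) (u : ι → (σ →₀ ℕ)) (Z : ι → Finset σ) : Prop :=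
  iSupIndep (fun i => stanleySpace K (u i) (Z i)) ∧
    (⨆ i, stanleySpace K (u i) (Z i)) = Submodule.restrictScalars K I

/-- The Stanley depth of a monomial ideal `I`: the largest `d` such that there is a Stanley
decomposition of `I` all of whose Stanley spaces `u_i K[Z_i]` satisfy `|Z_i| ≥ d`. -/
noncomputable def sdepthIdeal {K σ : Type*} [Field K] (I : Ideal (MvPolynomial σ K)) : ℕ :=
  sSup {d | ∃ (ι : Type) (_ : Fintype ι) (_ : Nonempty ι) (u : ι → (σ →₀ ℕ))
    (Z : ι → Finset σ), IsStanleyDecompOfIdeal I u Z ∧ ∀ i, d ≤ (Z i).card}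

/-- `(u, Z)` is a Stanley decomposition of `S/I`:  each Stanley space `x^(u i)·K[Z i]` meets
`I` trivially (equivalently, its image in `S/I` is a free `K[Z i]`-module), the images of the
Stanley spaces in `S/I` are independent, and they sum to `S/I`. -/
def IsStanleyDecompOfQuotient {K σ : Type*} [Field K] {ι : Type} [Fintype ι]
    (I : Ideal (MvPolynomial σ K)) (u : ι → (σ →₀ ℕ)) (Z : ι → Finset σ) : Prop :=
  (∀ i, Disjoint (stanleySpace K (u i) (Z i)) (Submodule.restrictScalars K I)) ∧
    iSupIndep (fun i =>
      (stanleySpace K (u i) (Z i)).map (Ideal.Quotient.mkₐ K I).toLinearMap) ∧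
    (⨆ i, (stanleySpace K (u i) (Z i)).map (Ideal.Quotient.mkₐ K I).toLinearMap) = ⊤

/-- The Stanley depth of `S/I` for a monomial ideal `I`. -/
noncomputable def sdepthQuot {K σ : Type*} [Field K] (I : Ideal (MvPolynomial σ K)) : ℕ :=
  sSup {d | ∃ (ι : Type) (_ : Fintype ι) (_ : Nonempty ι) (u : ι → (σ →₀ ℕ))
    (Z : ι → Finset σ), IsStanleyDecompOfQuotient I u Z ∧ ∀ i, d ≤ (Z i).card}

/-- A monomial ideal: an ideal generated by monomials. -/
def IsMonomialIdeal {K σ : Type*} [Field K] (I : Ideal (MvPolynomial σ K)) : Prop :=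
  ∃ A : Set (σ →₀ ℕ), I = Ideal.span ((fun a => (monomial a (1 : K) : MvPolynomial σ K)) '' A)

/-- The (exponents of the) minimal monomial generators of a monomial ideal `I`:
monomials in `I` that are not proper multiples of monomials in `I`. -/
def minimalGenerators {K σ : Type*} [Field K] (I : Ideal (MvPolynomial σ K)) :
    Set (σ →₀ ℕ) :=
  {a | (monomial a (1 : K) : MvPolynomial σ K) ∈ I ∧
    ∀ b < a, (monomial b (1 : K) : MvPolynomial σ K) ∉ I}

/-- The depth (w.r.t. the maximal graded ideal `m = (x_1,…,x_n)`) of a module `M` over the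
polynomial ring: the maximal length of a regular sequence on `M` consisting of elements
of `m`. -/
noncomputable def mdepth (K σ : Type*) [Field K] (M : Type*) [AddCommGroup M]
    [Module (MvPolynomial σ K) M] : ℕ :=
  sSup {k | ∃ rs : List (MvPolynomial σ K), rs.length = k ∧
    (∀ r ∈ rs, r ∈ Ideal.span (Set.range (X : σ → MvPolynomial σ K))) ∧
    RingTheory.Sequence.IsRegular M rs}

/-- The height of a prime ideal: the height of the corresponding point
of the prime spectrum, i.e. the supremum of lengths of chains of primes below it. -/
noncomputable def primeHt {R : Type*} [CommRing R] (P : Ideal R) (hP : P.IsPrime) : ℕ∞ :=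
  Order.height (⟨P, hP⟩ : PrimeSpectrum R)

section RestrictSupport

variable {R σ : Type*} [CommSemiring R]

theorem iSup_restrictSupport {ι : Sort*} (s : ι → Set (σ →₀ ℕ)) :
    ⨆ i, restrictSupport R (s i) = restrictSupport R (⋃ i, s i) := by
  simp only [restrictSupport_eq_span, Set.image_iUnion, Submodule.span_iUnion]

theorem restrictSupport_injective [Nontrivial R] :
    Function.Injective (restrictSupport R : Set (σ →₀ ℕ) → Submodule R (MvPolynomial σ R)) := by
  intro s t h
  ext d
  simpa using (SetLike.ext_iff.mp h) (monomial d 1)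

theorem disjoint_restrictSupport_iff [Nontrivial R] {s t : Set (σ →₀ ℕ)} :
    Disjoint (restrictSupport R s) (restrictSupport R t) ↔ Disjoint s t := by
  rw [Submodule.disjoint_def, Set.disjoint_left]
  refine ⟨fun h d hs ht ↦ ?_, fun h p hs ht ↦ ?_⟩
  · simpa using h (monomial d 1) (by simp [hs]) (by simp [ht])
  · rw [← support_eq_empty, Finset.eq_empty_iff_forall_notMem]
    exact fun d hd ↦ h (hs hd) (ht hd)

theorem iSupIndep_restrictSupport_iff [Nontrivial R] {ι : Type*} {s : ι → Set (σ →₀ ℕ)} :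
    iSupIndep (fun i ↦ restrictSupport R (s i)) ↔ Pairwise (Function.onFun Disjoint s) := by
  simp only [iSupIndep_def, iSup_restrictSupport, disjoint_restrictSupport_iff,
    Set.disjoint_iUnion_right]
  exact ⟨fun h i j hij ↦ h i j hij.symm, fun h i j hji ↦ h hji.symm⟩

end RestrictSupport

section LeadingTerm

variable {R σ : Type*}

theorem nonempty_monomialOrder.{u} (σ : Type u) : Nonempty (MonomialOrder.{u, u} σ) := by
  obtain ⟨_, _⟩ := exists_wellFoundedGT σ
  exact ⟨MonomialOrder.lex⟩

theorem leadingTerm_pow [CommSemiring R] [IsReduced R] (m : MonomialOrder σ)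
    (f : MvPolynomial σ R) (k : ℕ) : m.leadingTerm (f ^ k) = m.leadingTerm f ^ k := by
  simp only [MonomialOrder.leadingTerm, m.degree_pow, m.leadingCoeff_pow, monomial_pow]

theorem support_sub_leadingTerm [CommRing R] [DecidableEq σ] (m : MonomialOrder σ)
    (f : MvPolynomial σ R) :
    (f - m.leadingTerm f).support = f.support.erase (m.degree f) := by
  ext d
  rw [Finset.mem_erase, mem_support_iff, mem_support_iff, coeff_sub, MonomialOrder.leadingTerm,
    coeff_monomial]
  by_cases hd : m.degree f = d
  · simp [hd, MonomialOrder.leadingCoeff]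
  · simp [hd, Ne.symm hd]

theorem induction_sub_leadingTerm [CommRing R] (m : MonomialOrder σ)
    {motive : MvPolynomial σ R → Prop} (zero : motive 0)
    (sub_leadingTerm : ∀ f, motive (f - m.leadingTerm f) → motive f) (f : MvPolynomial σ R) :
    motive f := by
  classical
  induction hn : f.support.card generalizing f with
  | zero =>
    rw [Finset.card_eq_zero, support_eq_empty] at hn
    rwa [hn]
  | succ n ih =>
    have hf : f ≠ 0 := by
      rintro rfl
      simp at hn
    refine sub_leadingTerm f (ih _ ?_)
    rw [support_sub_leadingTerm, Finset.card_erase_of_mem (m.degree_mem_support hf), hn,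
      Nat.add_sub_cancel]

end LeadingTerm

section MonomialExponents

variable {R σ : Type*} [CommSemiring R] {I : Ideal (MvPolynomial σ R)}

/-- The set of exponents of the monomials in an ideal `I`; it determines `I` when `I` is a monomial
ideal. -/
def monomialExponents (I : Ideal (MvPolynomial σ R)) : Set (σ →₀ ℕ) :=
  {d | monomial d 1 ∈ I}

theorem monomial_mem_of_mem_monomialExponents {d : σ →₀ ℕ} (hd : d ∈ monomialExponents I) (c : R) :
    monomial d c ∈ I := by
  simpa [C_mul_monomial] using I.mul_mem_left (C c) hd

theorem add_mem_monomialExponents (v : σ →₀ ℕ) {d : σ →₀ ℕ} (hd : d ∈ monomialExponents I) :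
    v + d ∈ monomialExponents I := by
  simpa [monomialExponents, monomial_mul] using I.mul_mem_left (monomial v 1) hd

theorem monomialExponents_colon_monomial (v : σ →₀ ℕ) :
    monomialExponents (I.colon {monomial v 1}) = (v + ·) ⁻¹' monomialExponents I := by
  ext d
  simp [monomialExponents, Submodule.mem_colon_singleton, monomial_mul, add_comm]

theorem inf_colon_monomial_le_colon (I : Ideal (MvPolynomial σ R)) (f : MvPolynomial σ R) :
    f.support.inf (fun v ↦ I.colon {monomial v 1}) ≤ I.colon {f} := by
  intro g hg
  rw [Submodule.mem_finsetInf] at hg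
  rw [Submodule.mem_colon_singleton, f.as_sum, Finset.smul_sum]
  refine I.sum_mem fun v hv ↦ ?_
  have hgv : g * monomial v 1 ∈ I := Submodule.mem_colon_singleton.mp (hg v hv)
  simpa [mul_left_comm, C_mul_monomial] using I.mul_mem_left (C (f.coeff v)) hgv

end MonomialExponents

section MonomialIdeal

variable {K σ : Type*} [Field K] {I J : Ideal (MvPolynomial σ K)}

theorem isMonomialIdeal_iff :
    IsMonomialIdeal I ↔ ∀ p ∈ I, ↑p.support ⊆ monomialExponents I := by
  constructor
  · rintro ⟨A, rfl⟩ p hp d hd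
    obtain ⟨a, ha, had⟩ := mem_ideal_span_monomial_image.mp hp d hd
    refine mem_ideal_span_monomial_image.mpr fun e he ↦ ⟨a, ha, ?_⟩
    rwa [Finset.mem_singleton.mp (support_monomial_subset he)]
  · refine fun h ↦ ⟨monomialExponents I, le_antisymm (fun p hp ↦ ?_) ?_⟩
    · exact mem_ideal_span_monomial_image.mpr fun d hd ↦ ⟨d, h p hp hd, le_rfl⟩
    · exact Ideal.span_le.mpr (Set.image_subset_iff.mpr fun d hd ↦ hd)

theorem isMonomialIdeal_of_leadingTerm_mem (m : MonomialOrder σ)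
    (h : ∀ p ∈ I, m.leadingTerm p ∈ I) : IsMonomialIdeal I := by
  classical
  rw [isMonomialIdeal_iff]
  intro p
  induction p using induction_sub_leadingTerm m with
  | zero => simp
  | sub_leadingTerm p ih =>
    intro hp d hd
    by_cases hdeg : d = m.degree p
    · have hlc : p.coeff d ≠ 0 := mem_support_iff.mp hd
      have hlt : monomial d (p.coeff d) ∈ I := by
        rw [hdeg]
        exact h p hp
      simpa [monomialExponents, C_mul_monomial, hlc] using I.mul_mem_left (C (p.coeff d)⁻¹) hlt
    · refine ih (I.sub_mem hp (h p hp)) ?_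
      rw [support_sub_leadingTerm]
      exact Finset.mem_erase.mpr ⟨hdeg, hd⟩

namespace IsMonomialIdeal

theorem mem_iff (hI : IsMonomialIdeal I) {p : MvPolynomial σ K} :
    p ∈ I ↔ ↑p.support ⊆ monomialExponents I := by
  refine ⟨isMonomialIdeal_iff.mp hI p, fun hp ↦ ?_⟩
  rw [p.as_sum]
  exact I.sum_mem fun d hd ↦ monomial_mem_of_mem_monomialExponents (hp hd) _

theorem restrictScalars_eq (hI : IsMonomialIdeal I) :
    I.restrictScalars K = restrictSupport K (monomialExponents I) :=
  Submodule.ext fun _ ↦ hI.mem_iff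

theorem leadingTerm_mem (hI : IsMonomialIdeal I) (m : MonomialOrder σ) {p : MvPolynomial σ K}
    (hp : p ∈ I) : m.leadingTerm p ∈ I := by
  rcases eq_or_ne p 0 with rfl | hp0
  · simp
  · exact monomial_mem_of_mem_monomialExponents (hI.mem_iff.mp hp (m.degree_mem_support hp0)) _

theorem colon_monomial (hI : IsMonomialIdeal I) (v : σ →₀ ℕ) :
    IsMonomialIdeal (I.colon {monomial v 1}) := by
  rw [isMonomialIdeal_iff]
  intro p hp d hd
  rw [monomialExponents_colon_monomial]
  refine hI.mem_iff.mp (Submodule.mem_colon_singleton.mp hp) ?_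
  simpa [add_comm v d] using hd

theorem exists_leadingTerm_pow_mul_mem (hI : IsMonomialIdeal I) (m : MonomialOrder σ)
    {f g : MvPolynomial σ K} (hgf : g * f ∈ I) : ∃ k, m.leadingTerm g ^ k * f ∈ I := by
  induction f using induction_sub_leadingTerm m generalizing g with
  | zero => exact ⟨0, by simp⟩
  | sub_leadingTerm f ih =>
    set b := m.leadingTerm g with hb
    have hlead : b * m.leadingTerm f ∈ I := by
      simpa [b, m.leadingTerm_mul] using hI.leadingTerm_mem m hgf
    have hrest : (g * b) * (f - m.leadingTerm f) ∈ I := by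
      have h := I.sub_mem (I.mul_mem_left b hgf) (I.mul_mem_left g hlead)
      convert h using 1
      ring
    obtain ⟨k, hk⟩ := ih hrest
    rw [m.leadingTerm_mul, m.leadingTerm_leadingTerm, ← hb] at hk
    refine ⟨2 * k + 1, ?_⟩
    have h := I.add_mem (I.mul_mem_left b hk) (I.mul_mem_left ((b * b) ^ k) hlead)
    convert h using 1
    ring

theorem radical_colon_singleton (hI : IsMonomialIdeal I) (f : MvPolynomial σ K) :
    IsMonomialIdeal (I.colon {f}).radical := by
  obtain ⟨m⟩ := nonempty_monomialOrder σ
  refine isMonomialIdeal_of_leadingTerm_mem m fun g ⟨n, hg⟩ ↦ ?_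
  obtain ⟨k, hk⟩ := hI.exists_leadingTerm_pow_mul_mem m (Submodule.mem_colon_singleton.mp hg)
  refine ⟨n * k, Submodule.mem_colon_singleton.mpr ?_⟩
  rwa [leadingTerm_pow, ← pow_mul] at hk

theorem le_colon_monomial (hI : IsMonomialIdeal I) (hJ : IsMonomialIdeal J)
    {f : MvPolynomial σ K} (hJf : J ≤ I.colon {f}) {v : σ →₀ ℕ} (hv : v ∈ f.support) :
    J ≤ I.colon {monomial v 1} := by
  intro g hg
  rw [(hI.colon_monomial v).mem_iff, monomialExponents_colon_monomial]
  intro d hd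
  refine hI.mem_iff.mp (Submodule.mem_colon_singleton.mp (hJf (hJ.mem_iff.mp hg hd))) ?_
  simpa [add_comm v d] using hv

end IsMonomialIdeal

theorem bot_colon_singleton_quotientMk {R : Type*} [CommRing R] (I : Ideal R) (f : R) :
    (⊥ : Submodule R (R ⧸ I)).colon {Ideal.Quotient.mk I f} = I.colon {f} := by
  ext g
  rw [Submodule.mem_colon_singleton, Submodule.mem_colon_singleton, Submodule.mem_bot]
  exact Ideal.Quotient.eq_zero_iff_mem (a := g * f)

theorem IsMonomialIdeal.exists_colon_singleton_eq_colon_monomial (hI : IsMonomialIdeal I)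
    {f : MvPolynomial σ K} (hprime : (I.colon {f}).IsPrime) :
    ∃ v, I.colon {f} = I.colon {monomial v 1} := by
  have hmono : IsMonomialIdeal (I.colon {f}) := by
    simpa only [hprime.radical] using hI.radical_colon_singleton f
  obtain ⟨v, hv, hle⟩ := hprime.inf_le'.mp (inf_colon_monomial_le_colon I f)
  exact ⟨v, le_antisymm (hI.le_colon_monomial hmono le_rfl hv) hle⟩

theorem IsMonomialIdeal.exists_eq_colon_monomial_of_mem_associatedPrimes [Finite σ]
    {P : Ideal (MvPolynomial σ K)} (hI : IsMonomialIdeal I)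
    (hP : P ∈ associatedPrimes (MvPolynomial σ K) (MvPolynomial σ K ⧸ I)) :
    ∃ v, P = I.colon {monomial v 1} := by
  obtain ⟨hprime, x, rfl⟩ := isAssociatedPrime_iff.mp hP
  obtain ⟨f, rfl⟩ := Ideal.Quotient.mk_surjective x
  rw [bot_colon_singleton_quotientMk] at hprime ⊢
  exact hI.exists_colon_singleton_eq_colon_monomial hprime

end MonomialIdeal

section StanleyDecomposition

variable {K σ : Type*} [Field K] {I : Ideal (MvPolynomial σ K)}

/-- The box `u + ℕ^Z` of exponents of the monomials in the Stanley space `x^u K[Z]`. -/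
def stanleyExponents (u : σ →₀ ℕ) (Z : Set σ) : Set (σ →₀ ℕ) :=
  (u + ·) '' {v | ↑v.support ⊆ Z}

theorem mem_stanleyExponents_iff {u d : σ →₀ ℕ} {Z : Set σ} :
    d ∈ stanleyExponents u Z ↔ u ≤ d ∧ ∀ k ∉ Z, d k = u k := by
  constructor
  · rintro ⟨v, hv, rfl⟩
    refine ⟨le_self_add, fun k hk ↦ ?_⟩
    have hvk : v k = 0 := Finsupp.notMem_support_iff.mp fun h ↦ hk (hv h)
    simp [hvk]
  · rintro ⟨hle, heq⟩
    refine ⟨d - u, fun k hk ↦ ?_, add_tsub_cancel_of_le hle⟩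
    by_contra hkZ
    simp [heq k hkZ] at hk

-- The subtraction `u - v` is truncated: `v` may exceed `u` in the directions of `Z`.
theorem add_mem_stanleyExponents_iff {u v d : σ →₀ ℕ} {Z : Set σ} :
    v + d ∈ stanleyExponents u Z ↔ (∀ k ∉ Z, v k ≤ u k) ∧ d ∈ stanleyExponents (u - v) Z := by
  simp only [mem_stanleyExponents_iff, Finsupp.le_def, Finsupp.add_apply, Finsupp.tsub_apply]
  grind

theorem stanleySpace_eq_restrictSupport (u : σ →₀ ℕ) (Z : Set σ) :
    stanleySpace K u Z = restrictSupport K (stanleyExponents u Z) := by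
  rw [restrictSupport_eq_span, stanleyExponents, Set.image_image, stanleySpace]

theorem isStanleyDecompOfIdeal_iff (hI : IsMonomialIdeal I) {ι : Type} [Fintype ι]
    {u : ι → σ →₀ ℕ} {Z : ι → Finset σ} :
    IsStanleyDecompOfIdeal I u Z ↔
      Pairwise (Function.onFun Disjoint fun i ↦ stanleyExponents (u i) (Z i)) ∧
        ⋃ i, stanleyExponents (u i) (Z i) = monomialExponents I := by
  simp only [IsStanleyDecompOfIdeal, stanleySpace_eq_restrictSupport, hI.restrictScalars_eq,
    iSupIndep_restrictSupport_iff, iSup_restrictSupport, restrictSupport_injective.eq_iff]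

theorem IsStanleyDecompOfIdeal.colon_monomial (hI : IsMonomialIdeal I) {ι : Type} [Fintype ι]
    {u : ι → σ →₀ ℕ} {Z : ι → Finset σ} (h : IsStanleyDecompOfIdeal I u Z) (v : σ →₀ ℕ)
    [Fintype {i // ∀ k ∉ Z i, v k ≤ u i k}] :
    IsStanleyDecompOfIdeal (I.colon {monomial v 1})
      (fun i : {i // ∀ k ∉ Z i, v k ≤ u i k} ↦ u i - v) (fun i ↦ Z i) := by
  rw [isStanleyDecompOfIdeal_iff hI] at h
  obtain ⟨hdisj, hunion⟩ := h
  rw [isStanleyDecompOfIdeal_iff (hI.colon_monomial v), monomialExponents_colon_monomial, ← hunion]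
  refine ⟨fun i j hij ↦ Set.disjoint_left.mpr fun d hi hj ↦ ?_, ?_⟩
  · exact Set.disjoint_left.mp (hdisj (Subtype.coe_injective.ne hij))
      (add_mem_stanleyExponents_iff.mpr ⟨i.2, hi⟩) (add_mem_stanleyExponents_iff.mpr ⟨j.2, hj⟩)
  · ext d
    simp [add_mem_stanleyExponents_iff]

theorem IsStanleyDecompOfIdeal.exists_forall_notMem_le (hI : IsMonomialIdeal I) {ι : Type}
    [Fintype ι] [Nonempty ι] {u : ι → σ →₀ ℕ} {Z : ι → Finset σ}
    (h : IsStanleyDecompOfIdeal I u Z) (v : σ →₀ ℕ) : ∃ i, ∀ k ∉ Z i, v k ≤ u i k := by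
  inhabit ι
  obtain ⟨-, hunion⟩ := (isStanleyDecompOfIdeal_iff hI).mp h
  have hmem : u default ∈ monomialExponents I := by
    rw [← hunion]
    exact Set.mem_iUnion_of_mem default (mem_stanleyExponents_iff.mpr ⟨le_rfl, fun _ _ ↦ rfl⟩)
  have hadd := add_mem_monomialExponents v hmem
  rw [← hunion] at hadd
  obtain ⟨i, hi⟩ := Set.mem_iUnion.mp hadd
  exact ⟨i, (add_mem_stanleyExponents_iff.mp hi).1⟩

theorem bddAbove_stanleyDepths [Finite σ] (I : Ideal (MvPolynomial σ K)) :
    BddAbove {d | ∃ (ι : Type) (_ : Fintype ι) (_ : Nonempty ι) (u : ι → (σ →₀ ℕ))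
      (Z : ι → Finset σ), IsStanleyDecompOfIdeal I u Z ∧ ∀ i, d ≤ (Z i).card} := by
  cases nonempty_fintype σ
  refine ⟨Fintype.card σ, ?_⟩
  rintro d ⟨ι, _, ⟨i⟩, u, Z, -, hd⟩
  exact (hd i).trans (Z i).card_le_univ

theorem sdepthIdeal_le_sdepthIdeal_colon_monomial [Finite σ] (hI : IsMonomialIdeal I)
    (v : σ →₀ ℕ) : sdepthIdeal I ≤ sdepthIdeal (I.colon {monomial v 1}) := by
  classical
  refine csSup_le' ?_
  rintro d ⟨ι, _, _, u, Z, hdecomp, hd⟩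
  obtain ⟨i, hi⟩ := hdecomp.exists_forall_notMem_le hI v
  exact le_csSup (bddAbove_stanleyDepths _)
    ⟨_, inferInstance, ⟨⟨i, hi⟩⟩, _, _, hdecomp.colon_monomial hI v, fun j ↦ hd j⟩

end StanleyDecomposition

theorem sdepth_le_min_sdepth_associatedPrimes_general {K σ : Type*} [Field K] [Finite σ]
    {I P : Ideal (MvPolynomial σ K)} (hI : IsMonomialIdeal I)
    (hP : P ∈ associatedPrimes (MvPolynomial σ K) (MvPolynomial σ K ⧸ I)) :
    sdepthIdeal I ≤ sdepthIdeal P := by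
  obtain ⟨v, rfl⟩ := hI.exists_eq_colon_monomial_of_mem_associatedPrimes hP
  exact sdepthIdeal_le_sdepthIdeal_colon_monomial hI v

/-- **Theorem 1.1.** If `I` is a monomial ideal with `Ass(S/I) = {P_1,…,P_s}`, then
`sdepth I ≤ min_i sdepth (P_i)`. -/
theorem sdepth_le_min_sdepth_associatedPrimes {K : Type*} [Field K] {n s : ℕ}
    (I : Ideal (MvPolynomial (Fin n) K)) (hI : IsMonomialIdeal I)
    (P : Fin s → Ideal (MvPolynomial (Fin n) K))
    (hAss : associatedPrimes (MvPolynomial (Fin n) K)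
      ((MvPolynomial (Fin n) K) ⧸ I) = Set.range P) :
    ∀ i, sdepthIdeal I ≤ sdepthIdeal (P i) := by
  exact fun i ↦ sdepth_le_min_sdepth_associatedPrimes_general hI (hAss ▸ Set.mem_range_self i)
end

section
/- Let 1 ≤ r ≤ e ≤ q be positive integers with r + e + q = n, let P_1 = (x_1,…,x_r), P_2 = (x_{r+1},…,x_{r+e}), P_3 = (x_{r+e+1},…,x_{r+e+q}) be prime ideals of S = K[x_1,…,x_n], and let I = P_1 ∩ P_2 ∩ P_3. Then sdepth_S(S/I) ≥ min{ r + e, r + ⌈q/2⌉, ⌈e/2⌉ + ⌈q/2⌉ }. -/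
open MvPolynomial

/-!
The monomials outside a squarefree monomial ideal `I` are those whose support lies in some family
`F` of finite sets, and a partition of `F` into intervals `[U, Z]` yields a Stanley decomposition
of `S/I` into the spaces `x^U K[Z]`. When `I` is an intersection of primes generated by blocks of
variables, `F` consists of the sets avoiding some block. Split `F` according to the last block
avoided by a set: it avoids that block, has an arbitrary trace on the earlier blocks and a nonempty
trace on each later one. So it suffices to partition the nonempty subsets of a block `C` into
intervals whose upper ends contain at least half of `C`.

For `C` of odd size, arrange `C` in a cycle. For nonempty `A`, each point is followed by a gap, the
run of non-elements of `A` right after it. Removing from `A` its points with an odd gap gives the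
lower end of the interval through `A`, adding to `A` all points of `C` with an odd gap gives the
upper end. The parities of the gaps do not change along this interval. Points with an odd gap are
equinumerous with points outside `A` having an even gap, so twice the size of the upper end is the
size of `C` plus that of the lower end.
-/

/-- A partition of a family `F` of elements of a preorder into intervals contained in `F`. It is
encoded by the maps sending `a ∈ F` to the two endpoints of the interval through `a`; their
values outside `F` are irrelevant. -/
structure IntervalPartition {α : Type*} [Preorder α] (F : Set α) where
  lower : α → α
  upper : α → α
  lower_le : ∀ ⦃a⦄, a ∈ F → lower a ≤ a
  le_upper : ∀ ⦃a⦄, a ∈ F → a ≤ upper a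
  Icc_subset : ∀ ⦃a⦄, a ∈ F → Set.Icc (lower a) (upper a) ⊆ F
  lower_eq : ∀ ⦃a⦄, a ∈ F → ∀ ⦃b⦄, b ∈ Set.Icc (lower a) (upper a) → lower b = lower a
  upper_eq : ∀ ⦃a⦄, a ∈ F → ∀ ⦃b⦄, b ∈ Set.Icc (lower a) (upper a) → upper b = upper a

section CyclicPartition

variable {σ : Type*} {s : Equiv.Perm σ} {A B C : Finset σ} {i : σ}

/-- The number of consecutive non-elements of `A` met right after `i` when moving along `s`
(with junk value `0` if `A` is never met). -/
noncomputable def cyclicGap (s : Equiv.Perm σ) (A : Finset σ) (i : σ) : ℕ :=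
  sInf {k | (s ^ k) (s i) ∈ A}

theorem cyclicGap_eq_zero (h : s i ∈ A) : cyclicGap s A i = 0 :=
  Nat.sInf_eq_zero.2 (Or.inl h)

theorem cyclicGap_eq_succ (hs : s.IsCycleOn (C : Set σ)) (hA : A ∈ Set.Ioc ∅ C) (hi : i ∈ C)
    (h : s i ∉ A) : cyclicGap s A i = cyclicGap s A (s i) + 1 := by
  obtain ⟨a, ha⟩ := Finset.empty_ssubset.1 hA.1
  obtain ⟨k, -, hk⟩ := hs.exists_pow_eq (hs.apply_mem_iff.2 hi) (hA.2 ha)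
  have hne : {k | (s ^ k) (s i) ∈ A}.Nonempty := ⟨k, by rwa [Set.mem_ofPred_eq, hk]⟩
  have hpos : 1 ≤ sInf {k | (s ^ k) (s i) ∈ A} := by
    rw [Nat.one_le_iff_ne_zero, Ne, Nat.sInf_eq_zero]
    exact not_or.2 ⟨h, hne.ne_empty⟩
  exact (Nat.sInf_add hpos).symm

theorem even_cyclicGap_iff (hs : s.IsCycleOn (C : Set σ)) (hA : A ∈ Set.Ioc ∅ C) (hi : i ∈ C) :
    Even (cyclicGap s A i) ↔ s i ∈ A ∨ Odd (cyclicGap s A (s i)) := by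
  by_cases h : s i ∈ A
  · simp [cyclicGap_eq_zero h, h]
  · simp [cyclicGap_eq_succ hs hA hi h, Nat.even_add_one, h]

/-- The lower end of the interval through `A` in the cyclic partition: the elements of `A` that
are followed by an even gap. -/
noncomputable def cyclicLower (s : Equiv.Perm σ) (A : Finset σ) : Finset σ :=
  {i ∈ A | Even (cyclicGap s A i)}

variable [DecidableEq σ]

/-- The upper end of the interval through `A` in the cyclic partition of the nonempty subsets
of `C`: all points of `C` followed by an odd gap are added to `A`. -/
noncomputable def cyclicUpper (s : Equiv.Perm σ) (C A : Finset σ) : Finset σ :=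
  A ∪ {i ∈ C | Odd (cyclicGap s A i)}

theorem mem_iff_of_mem_Icc_of_even_cyclicGap
    (hB : B ∈ Set.Icc (cyclicLower s A) (cyclicUpper s C A)) (hi : Even (cyclicGap s A i)) :
    i ∈ B ↔ i ∈ A := by
  refine ⟨fun hiB => ?_, fun hiA => hB.1 (Finset.mem_filter.2 ⟨hiA, hi⟩)⟩
  simpa [cyclicUpper, Nat.not_odd_iff_even.2 hi] using hB.2 hiB

theorem card_filter_odd_cyclicGap (hs : s.IsCycleOn (C : Set σ)) (hA : A ∈ Set.Ioc ∅ C) :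
    (C.filter fun i => Odd (cyclicGap s A i)).card =
      (C.filter fun i => i ∉ A ∧ Even (cyclicGap s A i)).card := by
  refine Finset.card_equiv s fun i => ?_
  have hmem : s i ∈ C ↔ i ∈ C := hs.apply_mem_iff
  simp only [Finset.mem_filter, hmem]
  refine and_congr_right fun hi => ?_
  rw [← Nat.not_even_iff_odd, even_cyclicGap_iff hs hA hi, not_or, Nat.not_odd_iff_even]

theorem two_mul_card_cyclicUpper (hs : s.IsCycleOn (C : Set σ)) (hA : A ∈ Set.Ioc ∅ C) :
    2 * (cyclicUpper s C A).card = C.card + (cyclicLower s A).card := by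
  have hlower : cyclicLower s A = (C.filter fun i => i ∈ A ∧ Even (cyclicGap s A i)) := by
    grind [cyclicLower]
  have hupper : cyclicUpper s C A =
      cyclicLower s A ∪ C.filter fun i => Odd (cyclicGap s A i) := by
    grind [cyclicUpper, cyclicLower]
  have hdisj : Disjoint (cyclicLower s A) (C.filter fun i => Odd (cyclicGap s A i)) := by
    grind [cyclicLower, Finset.disjoint_left]
  have heven : (C.filter fun i => Even (cyclicGap s A i)).card =
      (cyclicLower s A).card + (C.filter fun i => i ∉ A ∧ Even (cyclicGap s A i)).card := by
    rw [hlower, ← Finset.card_filter_add_card_filter_not (s := C.filter _) (· ∈ A)]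
    simp only [Finset.filter_filter, and_comm]
  have htotal := Finset.card_filter_add_card_filter_not (s := C) fun i => Even (cyclicGap s A i)
  simp only [Nat.not_even_iff_odd] at htotal
  have hpair := card_filter_odd_cyclicGap hs hA
  rw [hupper, Finset.card_union_of_disjoint hdisj]
  omega

theorem mem_Ioc_of_mem_Icc_cyclic (hs : s.IsCycleOn (C : Set σ)) (hC : Odd C.card)
    (hA : A ∈ Set.Ioc ∅ C) (hB : B ∈ Set.Icc (cyclicLower s A) (cyclicUpper s C A)) :
    B ∈ Set.Ioc ∅ C := by
  have hcard := two_mul_card_cyclicUpper hs hA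
  have hlower : ∅ < cyclicLower s A := by
    refine Finset.empty_ssubset.2 (Finset.card_pos.1 ?_)
    obtain ⟨k, hk⟩ := hC
    omega
  exact ⟨hlower.trans_le hB.1,
    hB.2.trans (Finset.union_subset hA.2 (Finset.filter_subset _ _))⟩

theorem even_cyclicGap_iff_of_mem_Icc (hs : s.IsCycleOn (C : Set σ)) (hA : A ∈ Set.Ioc ∅ C)
    (hB : B ∈ Set.Ioc ∅ C) (hAB : B ∈ Set.Icc (cyclicLower s A) (cyclicUpper s C A))
    (hi : i ∈ C) : Even (cyclicGap s B i) ↔ Even (cyclicGap s A i) := by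
  have hstep {j : σ} (hj : j ∈ C) :
      Even (cyclicGap s A j) ↔ s j ∈ B ∨ Odd (cyclicGap s A (s j)) := by
    rw [even_cyclicGap_iff hs hA hj, ← Nat.not_even_iff_odd]
    have := mem_iff_of_mem_Icc_of_even_cyclicGap (i := s j) hAB
    tauto
  induction hn : cyclicGap s B i generalizing i with
  | zero =>
    have hiB : s i ∈ B := by
      by_contra h
      simp [cyclicGap_eq_succ hs hB hi h] at hn
    simp [hstep hi, hiB]
  | succ n ih =>
    have hiB : s i ∉ B := fun h => by simp [cyclicGap_eq_zero h] at hn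
    have hgap : cyclicGap s B (s i) = n := by
      simpa [cyclicGap_eq_succ hs hB hi hiB] using hn
    have hiff := ih (hs.apply_mem_iff.2 hi) hgap
    simp [hstep hi, hiB, Nat.even_add_one, hiff]

/-- The partition of the nonempty subsets of a cycle `C` of odd length into the intervals
`[cyclicLower s A, cyclicUpper s C A]`. -/
noncomputable def cyclicPartition (hs : s.IsCycleOn (C : Set σ)) (hC : Odd C.card) :
    IntervalPartition (Set.Ioc ∅ C) where
  lower := cyclicLower s
  upper := cyclicUpper s C
  lower_le _ _ := Finset.filter_subset _ _
  le_upper _ _ := Finset.subset_union_left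
  Icc_subset _ hA _ hB := mem_Ioc_of_mem_Icc_cyclic hs hC hA hB
  lower_eq A hA B hAB := by
    have hB := mem_Ioc_of_mem_Icc_cyclic hs hC hA hAB
    ext i
    simp only [cyclicLower, Finset.mem_filter]
    have hgap : i ∈ C → _ := even_cyclicGap_iff_of_mem_Icc hs hA hB hAB
    have hmem := mem_iff_of_mem_Icc_of_even_cyclicGap (i := i) hAB
    have hBC : i ∈ B → i ∈ C := @hB.2 i
    have hAC : i ∈ A → i ∈ C := @hA.2 i
    tauto
  upper_eq A hA B hAB := by
    have hB := mem_Ioc_of_mem_Icc_cyclic hs hC hA hAB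
    ext i
    simp only [cyclicUpper, Finset.mem_union, Finset.mem_filter, ← Nat.not_even_iff_odd]
    have hgap : i ∈ C → _ := even_cyclicGap_iff_of_mem_Icc hs hA hB hAB
    have hmem := mem_iff_of_mem_Icc_of_even_cyclicGap (i := i) hAB
    have hBC : i ∈ B → i ∈ C := @hB.2 i
    have hAC : i ∈ A → i ∈ C := @hA.2 i
    tauto

end CyclicPartition

namespace IntervalPartition

section Preorder

variable {α : Type*} [Preorder α] {F G : Set α}

theorem lower_mem_Icc (P : IntervalPartition F) {a : α} (ha : a ∈ F) :
    P.lower a ∈ Set.Icc (P.lower a) (P.upper a) :=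
  ⟨le_rfl, (P.lower_le ha).trans (P.le_upper ha)⟩

theorem upper_mem (P : IntervalPartition F) {a : α} (ha : a ∈ F) : P.upper a ∈ F :=
  P.Icc_subset ha ⟨(P.lower_le ha).trans (P.le_upper ha), le_rfl⟩

/-- The partition of an interval into a single part. -/
def single (a b : α) : IntervalPartition (Set.Icc a b) where
  lower _ := a
  upper _ := b
  lower_le _ h := h.1
  le_upper _ h := h.2
  Icc_subset _ _ := subset_rfl
  lower_eq _ _ _ _ := rfl
  upper_eq _ _ _ _ := rfl

open Classical in
/-- The partition of a disjoint union obtained by taking the intervals of both partitions. -/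
noncomputable def disjUnion (P : IntervalPartition F) (Q : IntervalPartition G)
    (h : Disjoint F G) : IntervalPartition (F ∪ G) where
  lower a := if a ∈ F then P.lower a else Q.lower a
  upper a := if a ∈ F then P.upper a else Q.upper a
  lower_le a ha := by
    split_ifs with haF
    · exact P.lower_le haF
    · exact Q.lower_le (ha.resolve_left haF)
  le_upper a ha := by
    split_ifs with haF
    · exact P.le_upper haF
    · exact Q.le_upper (ha.resolve_left haF)
  Icc_subset a ha := by
    split_ifs with haF
    · exact (P.Icc_subset haF).trans Set.subset_union_left
    · exact (Q.Icc_subset (ha.resolve_left haF)).trans Set.subset_union_right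
  lower_eq a ha b hb := by
    by_cases haF : a ∈ F
    · simp only [haF, if_true] at hb ⊢
      rw [if_pos (P.Icc_subset haF hb), P.lower_eq haF hb]
    · have haG : a ∈ G := ha.resolve_left haF
      simp only [haF, if_false] at hb ⊢
      rw [if_neg (h.notMem_of_mem_right (Q.Icc_subset haG hb)), Q.lower_eq haG hb]
  upper_eq a ha b hb := by
    by_cases haF : a ∈ F
    · simp only [haF, if_true] at hb ⊢
      rw [if_pos (P.Icc_subset haF hb), P.upper_eq haF hb]
    · have haG : a ∈ G := ha.resolve_left haF
      simp only [haF, if_false] at hb ⊢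
      rw [if_neg (h.notMem_of_mem_right (Q.Icc_subset haG hb)), Q.upper_eq haG hb]

end Preorder

variable {σ : Type*} [DecidableEq σ] {F G : Set (Finset σ)}

theorem inter_mem_Icc_of_mem_Icc_trace (P : IntervalPartition F) (Q : IntervalPartition G)
    {A B C : Finset σ} (hA : A ∩ C ∈ G)
    (hB : B ∈ Set.Icc (P.lower A ∪ Q.lower (A ∩ C)) (P.upper A \ (C \ Q.upper (A ∩ C)))) :
    B ∈ Set.Icc (P.lower A) (P.upper A) ∧
      B ∩ C ∈ Set.Icc (Q.lower (A ∩ C)) (Q.upper (A ∩ C)) := by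
  have hC := Q.lower_le hA
  obtain ⟨hBl, hBu⟩ := hB
  refine ⟨⟨Finset.union_subset_left hBl, hBu.trans Finset.sdiff_subset⟩,
    Finset.subset_inter (Finset.union_subset_right hBl) (hC.trans Finset.inter_subset_right), ?_⟩
  grind

/-- The common refinement of a partition of `F` with a partition of the possible traces on `C`:
it partitions the members of `F` whose trace on `C` lies in `G`. -/
def trace (P : IntervalPartition F) (Q : IntervalPartition G) (C : Finset σ) :
    IntervalPartition {A | A ∈ F ∧ A ∩ C ∈ G} where
  lower A := P.lower A ∪ Q.lower (A ∩ C)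
  upper A := P.upper A \ (C \ Q.upper (A ∩ C))
  lower_le A hA := Finset.union_subset (P.lower_le hA.1)
    ((Q.lower_le hA.2).trans Finset.inter_subset_left)
  le_upper A hA := by
    have hP := P.le_upper hA.1
    have hQ := Q.le_upper hA.2
    grind
  Icc_subset A hA B hB :=
    have h := P.inter_mem_Icc_of_mem_Icc_trace Q hA.2 hB
    ⟨P.Icc_subset hA.1 h.1, Q.Icc_subset hA.2 h.2⟩
  lower_eq A hA B hB := by
    obtain ⟨hP, hQ⟩ := P.inter_mem_Icc_of_mem_Icc_trace Q hA.2 hB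
    rw [P.lower_eq hA.1 hP, Q.lower_eq hA.2 hQ]
  upper_eq A hA B hB := by
    obtain ⟨hP, hQ⟩ := P.inter_mem_Icc_of_mem_Icc_trace Q hA.2 hB
    rw [P.upper_eq hA.1 hP, Q.upper_eq hA.2 hQ]

end IntervalPartition

/-- The family `F` has a partition into intervals whose upper ends all have at least `d`
elements. If `F` consists of the supports of the squarefree monomials outside a squarefree ideal
`I`, this bounds the Stanley depth of `S/I` from below by `d`. -/
def HasIntervalPartition {σ : Type*} (F : Set (Finset σ)) (d : ℕ) : Prop :=
  ∃ P : IntervalPartition F, ∀ A ∈ F, d ≤ (P.upper A).card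

namespace HasIntervalPartition

variable {σ : Type*} {F G : Set (Finset σ)} {C : Finset σ} {a b d : ℕ}

theorem empty (d : ℕ) : HasIntervalPartition (∅ : Set (Finset σ)) d :=
  ⟨⟨id, id, nofun, nofun, nofun, nofun, nofun⟩, nofun⟩

theorem Icc {U Z : Finset σ} (h : d ≤ Z.card) : HasIntervalPartition (Set.Icc U Z) d :=
  ⟨.single U Z, fun _ _ => h⟩

theorem union (hF : HasIntervalPartition F d) (hG : HasIntervalPartition G d)
    (h : Disjoint F G) : HasIntervalPartition (F ∪ G) d := by
  obtain ⟨P, hP⟩ := hF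
  obtain ⟨Q, hQ⟩ := hG
  refine ⟨P.disjUnion Q h, fun A hA => ?_⟩
  by_cases hAF : A ∈ F
  · simpa [IntervalPartition.disjUnion, hAF] using hP A hAF
  · simpa [IntervalPartition.disjUnion, hAF] using hQ A (hA.resolve_left hAF)

theorem trace [DecidableEq σ] (hF : HasIntervalPartition F a) (hG : HasIntervalPartition G b)
    (hGC : G ⊆ Set.Iic C) (h : d + C.card ≤ a + b) :
    HasIntervalPartition {A | A ∈ F ∧ A ∩ C ∈ G} d := by
  obtain ⟨P, hP⟩ := hF
  obtain ⟨Q, hQ⟩ := hG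
  refine ⟨P.trace Q C, fun A hA => ?_⟩
  have hremoved := Finset.card_sdiff_add_card_eq_card (hGC (Q.upper_mem hA.2))
  have hkept := Finset.le_card_sdiff (C \ Q.upper (A ∩ C)) (P.upper A)
  have hPA := hP A hA.1
  have hQA := hQ (A ∩ C) hA.2
  change d ≤ (P.upper A \ (C \ Q.upper (A ∩ C))).card
  omega

theorem Ioc_empty_of_odd (hC : Odd C.card) :
    HasIntervalPartition (Set.Ioc ∅ C) ((C.card + 1) / 2) := by
  classical
  obtain ⟨s, hs, -⟩ := C.countable_toSet.exists_cycleOn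
  refine ⟨cyclicPartition hs hC, fun A hA => ?_⟩
  have hcard : 2 * ((cyclicPartition hs hC).upper A).card = _ := two_mul_card_cyclicUpper hs hA
  omega

/-- This is the partition of Biró, Howard, Keller, Trotter and Young, which shows that the maximal
graded ideal in `n` variables has Stanley depth `⌈n/2⌉`. -/
theorem Ioc_empty (C : Finset σ) : HasIntervalPartition (Set.Ioc ∅ C) ((C.card + 1) / 2) := by
  classical
  rcases Nat.even_or_odd C.card with hC | hC
  · rcases C.eq_empty_or_nonempty with rfl | ⟨c, hc⟩
    · simpa using empty 0
    have hcard := Finset.card_erase_add_one hc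
    have hodd : Odd (C.erase c).card := by grind
    have hsplit : Set.Ioc ∅ C = Set.Icc {c} C ∪ Set.Ioc ∅ (C.erase c) := by
      ext A
      simp only [Set.mem_Ioc, Set.mem_union, Set.mem_Icc, Finset.subset_erase,
        Finset.singleton_subset_iff]
      grind
    have hdisj : Disjoint (Set.Icc {c} C) (Set.Ioc ∅ (C.erase c)) := by
      rw [Set.disjoint_left]
      intro A hA hA'
      simpa using hA'.2 (hA.1 (Finset.mem_singleton_self c))
    rw [hsplit]
    refine (Icc (by omega)).union ?_ hdisj
    convert Ioc_empty_of_odd hodd using 1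
    grind
  · exact Ioc_empty_of_odd hC

variable [Fintype σ]

theorem setOf_disjoint (h : d + C.card ≤ Fintype.card σ) :
    HasIntervalPartition {A : Finset σ | Disjoint A C} d := by
  classical
  have hIcc : {A : Finset σ | Disjoint A C} = Set.Icc ∅ Cᶜ := by
    ext A
    simp [Finset.subset_compl_iff_disjoint_right]
  rw [hIcc]
  exact Icc (by rw [Finset.card_compl]; omega)

theorem union_setOf_disjoint (hF : HasIntervalPartition F (d + C.card / 2))
    (h : d + C.card ≤ Fintype.card σ) :
    HasIntervalPartition ({A | Disjoint A C} ∪ F) d := by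
  classical
  have hsplit : {A | Disjoint A C} ∪ F =
      {A | Disjoint A C} ∪ {A | A ∈ F ∧ A ∩ C ∈ Set.Ioc ∅ C} := by
    ext A
    simp only [Set.mem_union, Set.mem_ofPred_eq, Set.mem_Ioc, Finset.disjoint_iff_inter_eq_empty,
      ← Finset.bot_eq_empty, bot_lt_iff_ne_bot, Finset.inter_subset_right, and_true]
    tauto
  rw [hsplit]
  refine (setOf_disjoint h).union (hF.trace (Ioc_empty C) Set.Ioc_subset_Iic_self (by omega)) ?_
  rw [Set.disjoint_left]
  intro A hA hA'
  exact hA'.2.1.ne' (Finset.disjoint_iff_inter_eq_empty.1 hA)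

theorem exists_mem_disjoint {ι : Type*} [LinearOrder ι] (B : ι → Finset σ) (s : Finset ι)
    (h : ∀ j ∈ s, d + (B j).card + ∑ i ∈ s with j < i, (B i).card / 2 ≤ Fintype.card σ) :
    HasIntervalPartition {A | ∃ j ∈ s, Disjoint A (B j)} d := by
  induction s using Finset.induction_on_max generalizing d with
  | empty => simpa using empty d
  | insert m s hm ih =>
    have hms : m ∉ s := fun h => (hm m h).false
    have hsplit : {A | ∃ j ∈ insert m s, Disjoint A (B j)} =
        {A | Disjoint A (B m)} ∪ {A | ∃ j ∈ s, Disjoint A (B j)} := by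
      ext A
      simp
    rw [hsplit]
    refine union_setOf_disjoint (ih fun j hj => ?_) ?_
    · have hj' := h j (Finset.mem_insert_of_mem hj)
      rw [Finset.filter_insert, if_pos (hm j hj), Finset.sum_insert (by simp [hms])] at hj'
      omega
    · have hm' := h m (Finset.mem_insert_self m s)
      omega

end HasIntervalPartition

section RestrictSupport

variable {σ R : Type*} [CommSemiring R]

theorem restrictSupport_iUnion {ι : Sort*} (T : ι → Set (σ →₀ ℕ)) :
    restrictSupport R (⋃ i, T i) = ⨆ i, restrictSupport R (T i) := by
  simp only [restrictSupport_eq_span, Set.image_iUnion, Submodule.span_iUnion]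

theorem restrictSupport_union (T T' : Set (σ →₀ ℕ)) :
    restrictSupport R (T ∪ T') = restrictSupport R T ⊔ restrictSupport R T' := by
  simp only [restrictSupport_eq_span, Set.image_union, Submodule.span_union]

theorem disjoint_restrictSupport {T T' : Set (σ →₀ ℕ)} (h : Disjoint T T') :
    Disjoint (restrictSupport R T) (restrictSupport R T') := by
  rw [Submodule.disjoint_def]
  intro p hp hp'
  rw [mem_restrictSupport_iff] at hp hp'
  rw [← support_eq_empty, ← Finset.coe_eq_empty, ← Set.subset_empty_iff]
  exact h hp hp'

theorem restrictScalars_iInf_span_X_image {ι : Type*} (B : ι → Finset σ) :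
    (⨅ j, Ideal.span ((X : σ → MvPolynomial σ R) '' (B j : Set σ))).restrictScalars R =
      restrictSupport R {a | ¬ ∃ j, Disjoint a.support (B j)} := by
  ext p
  simp only [Submodule.restrictScalars_mem, Ideal.mem_iInf, mem_ideal_span_X_image,
    mem_restrictSupport_iff, not_exists, Finset.not_disjoint_iff, Finsupp.mem_support_iff,
    Finset.mem_coe]
  exact ⟨fun h a ha j => (h j a ha).imp fun _ => And.symm,
    fun h j a ha => (h ha j).imp fun _ => And.symm⟩

end RestrictSupport

section Quotient

theorem ker_toLinearMap_mkₐ (R : Type*) {A : Type*} [CommRing R] [CommRing A] [Algebra R A]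
    (I : Ideal A) : LinearMap.ker (Ideal.Quotient.mkₐ R I).toLinearMap = I.restrictScalars R := by
  ext a
  simp [Ideal.Quotient.eq_zero_iff_mem]

variable {R σ ι : Type*} [CommRing R] {I : Ideal (MvPolynomial σ R)} {N : Set (σ →₀ ℕ)}
  {T : ι → Set (σ →₀ ℕ)}

theorem iSupIndep_map_mkₐ_restrictSupport
    (hI : I.restrictScalars R = restrictSupport R N) (hT : Pairwise fun i j => Disjoint (T i) (T j))
    (hN : ∀ i, Disjoint (T i) N) :
    iSupIndep fun i => (restrictSupport R (T i)).map (Ideal.Quotient.mkₐ R I).toLinearMap := by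
  intro i
  have hdisj : Disjoint (T i) ((⋃ j, ⋃ _ : j ≠ i, T j) ∪ N) := by
    simp only [Set.disjoint_union_right, Set.disjoint_iUnion_right]
    exact ⟨fun j hj => hT hj.symm, hN i⟩
  have hmap := Submodule.disjoint_map_of_ker_le_right (f := (Ideal.Quotient.mkₐ R I).toLinearMap)
    (disjoint_restrictSupport hdisj)
    (by rw [ker_toLinearMap_mkₐ, hI]; exact restrictSupport_mono R Set.subset_union_right)
  refine hmap.mono_right ?_
  simp only [← Submodule.map_iSup, ← restrictSupport_iUnion]
  exact Submodule.map_mono (restrictSupport_mono R Set.subset_union_left)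

theorem iSup_map_mkₐ_restrictSupport
    (hI : I.restrictScalars R = restrictSupport R N) (hT : (⋃ i, T i) ∪ N = Set.univ) :
    ⨆ i, (restrictSupport R (T i)).map (Ideal.Quotient.mkₐ R I).toLinearMap = ⊤ := by
  rw [← Submodule.map_iSup, ← restrictSupport_iUnion, LinearMap.map_eq_top_iff
    (LinearMap.range_eq_top.2 (Ideal.Quotient.mkₐ_surjective R I)), ker_toLinearMap_mkₐ, hI,
    ← restrictSupport_union, hT, restrictSupport_univ]

end Quotient

section StanleyDecomposition

variable {K σ : Type*} [Field K] {I : Ideal (MvPolynomial σ K)}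

theorem stanleySpace_indicator {U Z : Finset σ} (hUZ : U ⊆ Z) :
    stanleySpace K (Finsupp.indicator U fun _ _ => 1) (Z : Set σ) =
      restrictSupport K {a | a.support ∈ Set.Icc U Z} := by
  classical
  rw [restrictSupport_eq_span, stanleySpace]
  congr 1
  ext p
  simp only [Set.mem_image, Set.mem_ofPred_eq, Set.mem_Icc]
  constructor
  · rintro ⟨v, hv, rfl⟩
    refine ⟨_, ⟨fun i hi => by simp [Finsupp.indicator_apply, hi], ?_⟩, rfl⟩
    refine Finsupp.support_add.trans (Finset.union_subset ?_ (Finset.coe_subset.1 hv))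
    exact (Finsupp.support_indicator_subset _ _).trans hUZ
  · rintro ⟨a, ⟨hUa, haZ⟩, rfl⟩
    have hle : Finsupp.indicator U (fun _ _ => 1) ≤ a := fun i => by
      by_cases hi : i ∈ U
      · simpa [Finsupp.indicator_apply, hi, Nat.one_le_iff_ne_zero] using hUa hi
      · simp [Finsupp.indicator_apply, hi]
    refine ⟨a - Finsupp.indicator U fun _ _ => 1, ?_, by rw [add_tsub_cancel_of_le hle]⟩
    exact_mod_cast (Finsupp.support_tsub).trans haZ

/-- The correspondence of Herzog, Vladoiu and Zheng: an interval `[U, Z]` of squarefree monomials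
gives the Stanley space `x^U K[Z]`. -/
theorem isStanleyDecompOfQuotient_indicator {F : Set (Finset σ)}
    (hI : I.restrictScalars K = restrictSupport K {a | a.support ∉ F}) {ι : Type} [Fintype ι]
    {U Z : ι → Finset σ} (hUZ : ∀ i, U i ⊆ Z i)
    (hdisj : Pairwise fun i j => Disjoint (Set.Icc (U i) (Z i)) (Set.Icc (U j) (Z j)))
    (hF : ⋃ i, Set.Icc (U i) (Z i) = F) :
    IsStanleyDecompOfQuotient I (fun i => Finsupp.indicator (U i) fun _ _ => 1) Z := by
  have hN (i : ι) : Disjoint {a : σ →₀ ℕ | a.support ∈ Set.Icc (U i) (Z i)}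
      {a | a.support ∉ F} := by
    rw [Set.disjoint_left]
    exact fun a ha haF => haF (hF ▸ Set.mem_iUnion_of_mem i ha)
  simp only [IsStanleyDecompOfQuotient, stanleySpace_indicator (hUZ _)]
  refine ⟨fun i => hI ▸ disjoint_restrictSupport (hN i), ?_, ?_⟩
  · exact iSupIndep_map_mkₐ_restrictSupport hI (fun i j hij => (hdisj hij).preimage _) hN
  · refine iSup_map_mkₐ_restrictSupport hI ?_
    subst hF
    ext a
    simp only [Set.mem_union, Set.mem_iUnion, Set.mem_ofPred_eq, Set.mem_univ, iff_true]
    exact em _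

variable [Finite σ]

theorem le_sdepthQuot_of_isStanleyDecompOfQuotient {ι : Type} [Fintype ι] [Nonempty ι]
    {u : ι → σ →₀ ℕ} {Z : ι → Finset σ} {d : ℕ} (h : IsStanleyDecompOfQuotient I u Z)
    (hd : ∀ i, d ≤ (Z i).card) : d ≤ sdepthQuot I := by
  have := Fintype.ofFinite σ
  refine le_csSup ⟨Fintype.card σ, ?_⟩ ⟨ι, inferInstance, inferInstance, u, Z, h, hd⟩
  rintro _ ⟨_, _, ⟨i⟩, _, Z', _, hd'⟩
  exact (hd' i).trans (Finset.card_le_univ (Z' i))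

theorem HasIntervalPartition.le_sdepthQuot {F : Set (Finset σ)} {d : ℕ}
    (h : HasIntervalPartition F d) (hF : F.Nonempty)
    (hI : I.restrictScalars K = restrictSupport K {a | a.support ∉ F}) : d ≤ sdepthQuot I := by
  obtain ⟨P, hP⟩ := h
  let LowerEnd := {A : Finset σ // A ∈ F ∧ P.lower A = A}
  have hlower {A : Finset σ} (hA : A ∈ F) : P.lower A ∈ F ∧ P.lower (P.lower A) = P.lower A :=
    ⟨P.Icc_subset hA (P.lower_mem_Icc hA), P.lower_eq hA (P.lower_mem_Icc hA)⟩
  have : Nonempty LowerEnd := hF.elim fun A hA => ⟨⟨P.lower A, hlower hA⟩⟩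
  have hIcc {A : LowerEnd} {B : Finset σ} (hB : B ∈ Set.Icc A.1 (P.upper A)) :
      B ∈ Set.Icc (P.lower A) (P.upper A) := by rwa [A.2.2]
  -- Stanley decompositions are indexed by types in `Type`, whereas `σ` may lie in any universe.
  let e := Finite.equivFin LowerEnd
  have : Nonempty (Fin (Nat.card LowerEnd)) := e.nonempty_congr.1 inferInstance
  refine le_sdepthQuot_of_isStanleyDecompOfQuotient (isStanleyDecompOfQuotient_indicator hI
    (U := fun i => (e.symm i).1) (Z := fun i => P.upper (e.symm i)) (fun i => ?_)
    (fun i j hij => ?_) ?_) fun i => hP _ (e.symm i).2.1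
  · exact P.le_upper (e.symm i).2.1
  · refine Set.disjoint_left.2 fun B hi hj => hij (e.symm.injective (Subtype.ext ?_))
    rw [← (e.symm i).2.2, ← (e.symm j).2.2, ← P.lower_eq (e.symm i).2.1 (hIcc hi),
      P.lower_eq (e.symm j).2.1 (hIcc hj)]
  · rw [e.symm.surjective.iUnion_comp fun A : LowerEnd => Set.Icc A.1 (P.upper A)]
    refine subset_antisymm (Set.iUnion_subset fun A B hB => P.Icc_subset A.2.1 (hIcc hB)) ?_
    intro A hA
    refine Set.mem_iUnion_of_mem ⟨P.lower A, hlower hA⟩ ⟨P.lower_le hA, ?_⟩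
    rw [P.upper_eq hA (P.lower_mem_Icc hA)]
    exact P.le_upper hA

end StanleyDecomposition

theorem card_filter_val_mem_Ico {n a b : ℕ} (hb : b ≤ n) :
    (Finset.univ.filter fun i : Fin n => a ≤ i ∧ i < b).card = b - a := by
  rw [← Nat.card_Ico, ← Finset.card_map Fin.valEmbedding]
  congr 1
  ext k
  simp only [Finset.mem_map, Finset.mem_filter, Finset.mem_univ, true_and, Finset.mem_Ico,
    Fin.valEmbedding_apply]
  exact ⟨by rintro ⟨i, hi, rfl⟩; exact hi, fun hk => ⟨⟨k, by omega⟩, hk, rfl⟩⟩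

theorem sdepth_quot_ge_three_disjoint_primes_general {K σ ι : Type*} [Field K] [Fintype σ]
    [Fintype ι] [LinearOrder ι] [Nonempty ι] (B : ι → Finset σ) {d : ℕ}
    (hd : ∀ j, d + (B j).card + ∑ i with j < i, (B i).card / 2 ≤ Fintype.card σ) :
    d ≤ sdepthQuot (⨅ j, Ideal.span ((X : σ → MvPolynomial σ K) '' (B j : Set σ))) := by
  have hpart := HasIntervalPartition.exists_mem_disjoint B Finset.univ fun j _ => hd j
  simp only [Finset.mem_univ, true_and] at hpart
  refine hpart.le_sdepthQuot ⟨∅, ?_⟩ (restrictScalars_iInf_span_X_image B)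
  exact ⟨Classical.arbitrary ι, Finset.disjoint_empty_left _⟩

/-- **Lemma 2.5.** With `P_1, P_2, P_3` as in Corollary 2.2,
`sdepth S/I ≥ min(r + e, r + ⌈q/2⌉, ⌈e/2⌉ + ⌈q/2⌉)`. -/
theorem sdepth_quot_ge_three_disjoint_primes {K : Type*} [Field K] {r e q n : ℕ}
    (hr : 0 < r) (hre : r ≤ e) (heq : e ≤ q) (hn : r + e + q = n)
    (P₁ P₂ P₃ I : Ideal (MvPolynomial (Fin n) K))
    (hP₁ : P₁ = Ideal.span
      ((fun j => (X j : MvPolynomial (Fin n) K)) '' {i : Fin n | (i : ℕ) < r}))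
    (hP₂ : P₂ = Ideal.span
      ((fun j => (X j : MvPolynomial (Fin n) K)) '' {i : Fin n | r ≤ (i : ℕ) ∧ (i : ℕ) < r + e}))
    (hP₃ : P₃ = Ideal.span
      ((fun j => (X j : MvPolynomial (Fin n) K)) '' {i : Fin n | r + e ≤ (i : ℕ)}))
    (hI : I = P₁ ⊓ P₂ ⊓ P₃) :
    min (r + e) (min (r + (q + 1) / 2) ((e + 1) / 2 + (q + 1) / 2)) ≤ sdepthQuot I := by
  let c : Fin 4 → ℕ := ![0, r, r + e, n]
  let B (j : Fin 3) : Finset (Fin n) := {i | c j.castSucc ≤ i ∧ i < c j.succ}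
  have hcard (j : Fin 3) : (B j).card = c j.succ - c j.castSucc :=
    card_filter_val_mem_Ico (by fin_cases j <;> simp [c] <;> omega)
  have hIB : I = ⨅ j, Ideal.span (X '' (B j : Set (Fin n))) := by
    simp [hI, hP₁, hP₂, hP₃, B, c, ← Finset.inf_univ_eq_iInf, Fin.univ_succ, inf_assoc]
  rw [hIB]
  refine sdepth_quot_ge_three_disjoint_primes_general B fun j => ?_
  rw [Fintype.card_fin]
  fin_cases j <;> simp [hcard, c, Finset.sum_filter, Fin.sum_univ_succ] <;> omega
end
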